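/- arXiv:2401.14513 — 3 statements merged into one kernel-verified Lean document; each statement's English description precedes it below -/
import Mathlib

section
/- Let Γ be a congruence subgroup of SL₂(ℤ), i.e., a subgroup containing the kernel of the reduction map SL₂(ℤ) → SL₂(ℤ/Nℤ) for some positive integer N. Let α be a matrix in GL₂(ℚ) with det(α) > 0. Then the subgroup {δ ∈ SL₂(ℤ) : α δ α⁻¹ ∈ Γ} (that is, α⁻¹Γα ∩ SL₂(ℤ), where Γ and SL₂(ℤ) are viewed inside GL₂(ℚ)) is again a congruence subgroup of SL₂(ℤ). -/
open scoped MatrixGroups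

/-- If `Γ` is a congruence subgroup of `SL₂(ℤ)` and `α ∈ GL₂(ℚ)` has positive
determinant, then `{δ ∈ SL₂(ℤ) : α δ α⁻¹ ∈ Γ}` (i.e. `α⁻¹Γα ∩ SL₂(ℤ)`, computed
inside `GL₂(ℚ)`) is again a (subgroup and indeed) congruence subgroup of `SL₂(ℤ)`. -/
theorem conjugate_congruence_subgroup
    (Γ : Subgroup SL(2, ℤ)) (hΓ : CongruenceSubgroup.IsCongruenceSubgroup Γ)
    (α : GL (Fin 2) ℚ) (hα : 0 < ((α : Matrix (Fin 2) (Fin 2) ℚ)).det) :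
    ∃ Γ' : Subgroup SL(2, ℤ),
      (Γ' : Set SL(2, ℤ)) =
        {δ : SL(2, ℤ) | ∃ γ ∈ Γ,
          (α : Matrix (Fin 2) (Fin 2) ℚ) *
              ((δ : Matrix (Fin 2) (Fin 2) ℤ).map ((↑) : ℤ → ℚ)) *
              ((α⁻¹ : GL (Fin 2) ℚ) : Matrix (Fin 2) (Fin 2) ℚ) =
            ((γ : Matrix (Fin 2) (Fin 2) ℤ).map ((↑) : ℤ → ℚ))} ∧
      CongruenceSubgroup.IsCongruenceSubgroup Γ' := by
  -- `Γ'` is the preimage of the image of `Γ` in `GL₂(ℚ)` under `δ ↦ α δ α⁻¹`.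
  refine ⟨(Γ.map (Matrix.SpecialLinearGroup.mapGL ℚ)).comap
    ((MulAut.conj α).toMonoidHom.comp (Matrix.SpecialLinearGroup.mapGL ℚ)), ?_, ?_⟩
  · ext δ
    constructor
    · rintro ⟨γ, hγ, h⟩
      exact ⟨γ, hγ, (congrArg Units.val h).symm⟩
    · rintro ⟨γ, hγ, h⟩
      exact ⟨γ, hγ, Units.ext h.symm⟩
  -- If `Γ(M) ≤ Γ`, some `N ≠ 0` satisfies `α Γ(N) α⁻¹ ≤ Γ(M)`, obtained by clearing the
  -- denominators of `α` and `α⁻¹`.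
  · obtain ⟨M, hM, hMΓ⟩ := hΓ
    have : NeZero M := ⟨hM⟩
    obtain ⟨N, hN, h⟩ := CongruenceSubgroup.exists_Gamma_le_conj α M
    exact ⟨N, hN, fun x hx ↦ Subgroup.map_mono hMΓ (h x hx)⟩
end

section
/- Let G be a group, let H₁ and H₂ be subgroups of G, let α ∈ G, and let (γ_{2,i})_{i ∈ I} be a family of elements of H₂. Then H₂ is the disjoint union of the right cosets (α⁻¹H₁α ∩ H₂)·γ_{2,i} over i ∈ I if and only if the double coset H₁αH₂ is the disjoint union of the right cosets H₁·α·γ_{2,i} over i ∈ I. -/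
/-!
For `h ∈ H₁` and `k, γ ∈ H₂`, the element `hαk` lies in `H₁αγ` exactly when
`α(kγ⁻¹)α⁻¹ ∈ H₁`, that is, when `k ∈ (α⁻¹H₁α ∩ H₂)γ` (`mul_mem_rightCoset_iff`).
Every element of `H₁αH₂` has the form `hαk`, so covering and disjointness of the two families of
cosets translate into each other.
-/

open scoped Pointwise

/-- The subgroup-as-a-set `α⁻¹H₁α ∩ H₂ = {k ∈ H₂ : α k α⁻¹ ∈ H₁}`. -/
def conjIntersection {G : Type*} [Group G] (H₁ H₂ : Subgroup G) (α : G) : Set G :=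
  {k : G | k ∈ H₂ ∧ α * k * α⁻¹ ∈ H₁}

/-- The right cosets of `α⁻¹H₁α ∩ H₂` in `H₂` are the preimages of the right cosets of `H₁` in
`H₁αH₂` under `k ↦ h α k`, whichever `h ∈ H₁` is chosen. -/
theorem mul_mem_rightCoset_iff {G : Type*} [Group G] {H₁ H₂ : Subgroup G} {α h k γ : G}
    (hh : h ∈ H₁) (hk : k ∈ H₂) (hγ : γ ∈ H₂) :
    h * α * k ∈ (H₁ : Set G) * ({α * γ} : Set G) ↔
      k ∈ conjIntersection H₁ H₂ α * ({γ} : Set G) := by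
  have e : h * α * k * (α * γ)⁻¹ = h * (α * (k * γ⁻¹) * α⁻¹) := by group
  simp only [Set.mul_singleton, Set.image_mul_right, Set.mem_preimage, SetLike.mem_coe,
    conjIntersection, Set.mem_ofPred_eq, e, H₁.mul_mem_cancel_left hh,
    H₂.mul_mem hk (H₂.inv_mem hγ), true_and]

theorem conjIntersection_mul_singleton_subset {G : Type*} [Group G] {H₁ H₂ : Subgroup G}
    {α γ : G} (hγ : γ ∈ H₂) : conjIntersection H₁ H₂ α * ({γ} : Set G) ⊆ H₂ := by
  rintro _ ⟨k, hk, _, rfl, rfl⟩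
  exact H₂.mul_mem hk.1 hγ

theorem rightCoset_subset_doubleCoset {G : Type*} [Group G] {H₁ H₂ : Subgroup G}
    {α γ : G} (hγ : γ ∈ H₂) :
    (H₁ : Set G) * ({α * γ} : Set G) ⊆ (H₁ : Set G) * ({α} : Set G) * (H₂ : Set G) := by
  rintro _ ⟨h, hh, _, rfl, rfl⟩
  exact ⟨h * α, ⟨h, hh, α, rfl, rfl⟩, γ, hγ, mul_assoc _ _ _⟩

/-- For a family `(γ₂ᵢ)` of elements of `H₂`, `H₂` is the disjoint union of the right
cosets `(α⁻¹H₁α ∩ H₂)·γ₂ᵢ` if and only if the double coset `H₁αH₂` is the disjoint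
union of the right cosets `H₁·α·γ₂ᵢ`. -/
theorem doubleCoset_representatives_iff {G : Type*} [Group G]
    (H₁ H₂ : Subgroup G) (α : G) {ι : Type*} (γ₂ : ι → G) (hγ₂ : ∀ i, γ₂ i ∈ H₂) :
    ((⋃ i, conjIntersection H₁ H₂ α * ({γ₂ i} : Set G)) = (H₂ : Set G) ∧
        Pairwise fun i j =>
          Disjoint (conjIntersection H₁ H₂ α * ({γ₂ i} : Set G))
            (conjIntersection H₁ H₂ α * ({γ₂ j} : Set G))) ↔
      ((⋃ i, (H₁ : Set G) * ({α * γ₂ i} : Set G)) =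
          (H₁ : Set G) * ({α} : Set G) * (H₂ : Set G) ∧
        Pairwise fun i j =>
          Disjoint ((H₁ : Set G) * ({α * γ₂ i} : Set G))
            ((H₁ : Set G) * ({α * γ₂ j} : Set G))) := by
  constructor
  · rintro ⟨hU, hD⟩
    refine ⟨(Set.iUnion_subset fun i => rightCoset_subset_doubleCoset (hγ₂ i)).antisymm ?_, ?_⟩
    · rintro _ ⟨_, ⟨h, hh, _, rfl, rfl⟩, k, hk, rfl⟩
      obtain ⟨i, hi⟩ := Set.mem_iUnion.1 (hU.symm.subset hk)
      exact Set.mem_iUnion.2 ⟨i, (mul_mem_rightCoset_iff hh hk (hγ₂ i)).2 hi⟩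
    · intro i j hij
      refine Set.disjoint_left.2 fun g hi hj => ?_
      obtain ⟨_, ⟨h, hh, _, rfl, rfl⟩, k, hk, rfl⟩ := rightCoset_subset_doubleCoset (hγ₂ i) hi
      exact Set.disjoint_left.1 (hD hij) ((mul_mem_rightCoset_iff hh hk (hγ₂ i)).1 hi)
        ((mul_mem_rightCoset_iff hh hk (hγ₂ j)).1 hj)
  · rintro ⟨hU, hD⟩
    refine ⟨(Set.iUnion_subset fun i =>
      conjIntersection_mul_singleton_subset (hγ₂ i)).antisymm ?_, ?_⟩
    · intro k hk
      have hmem : 1 * α * k ∈ (H₁ : Set G) * ({α} : Set G) * (H₂ : Set G) :=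
        ⟨1 * α, ⟨1, H₁.one_mem, α, rfl, rfl⟩, k, hk, rfl⟩
      obtain ⟨i, hi⟩ := Set.mem_iUnion.1 (hU.symm.subset hmem)
      exact Set.mem_iUnion.2 ⟨i, (mul_mem_rightCoset_iff H₁.one_mem hk (hγ₂ i)).1 hi⟩
    · intro i j hij
      refine Set.disjoint_left.2 fun k hi hj => ?_
      have hk : k ∈ H₂ := conjIntersection_mul_singleton_subset (hγ₂ i) hi
      exact Set.disjoint_left.1 (hD hij)
        ((mul_mem_rightCoset_iff H₁.one_mem hk (hγ₂ i)).2 hi)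
        ((mul_mem_rightCoset_iff H₁.one_mem hk (hγ₂ j)).2 hj)
end

section
/- Let N be a positive integer that is not a perfect square, let w_N = (1/√N)·[[0,−1],[N,0]] ∈ GL₂(ℝ), and let α ∈ GL₂(ℝ) be a matrix with rational entries and positive determinant. Writing Γ₀(N) for the image of {[[a,b],[c,d]] ∈ SL₂(ℤ) : c ≡ 0 mod N} in GL₂(ℝ), and Γ₀⁺(N) = Γ₀(N) ∪ w_N·Γ₀(N), one has the equality of subsets of GL₂(ℝ): α⁻¹·Γ₀⁺(N)·α ∩ Γ₀⁺(N) = (α⁻¹·Γ₀(N)·α ∩ Γ₀(N)) ∪ (α⁻¹·(w_N·Γ₀(N))·α ∩ w_N·Γ₀(N)). -/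
/-!
Let `S` be the subring of real matrices with rational entries. It contains `Γ₀(N)`, and it is
stable under conjugation by `α` and `α⁻¹`, since `α` and `α⁻¹` lie in `S`. On the other hand
`S` is disjoint from `w_N·Γ₀(N)`: the first row of `w_N γ` is `-(c, d)/√N`, where `(c, d) ≠ 0` is
the bottom row of `γ`, and `√N` is irrational. Hence neither `α⁻¹Γ₀(N)α ∩ w_NΓ₀(N)` nor
`α⁻¹w_NΓ₀(N)α ∩ Γ₀(N)` has an element, and distributing the intersection over the unions gives
the result.
-/

open scoped MatrixGroups

/-- The Atkin–Lehner matrix `w_N = (1/√N)·[[0,−1],[N,0]]` as a real 2×2 matrix. -/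
noncomputable def atkinLehner (N : ℕ) : Matrix (Fin 2) (Fin 2) ℝ :=
  (Real.sqrt N)⁻¹ • !![0, -1; (N : ℝ), 0]

/-- `Γ₀(N)` viewed as a set of real 2×2 matrices. -/
def Gamma0Rset (N : ℕ) : Set (Matrix (Fin 2) (Fin 2) ℝ) :=
  {m | ∃ γ ∈ CongruenceSubgroup.Gamma0 N,
    ((γ : Matrix (Fin 2) (Fin 2) ℤ).map ((↑) : ℤ → ℝ)) = m}

/-- `w_N·Γ₀(N)` viewed as a set of real 2×2 matrices. -/
noncomputable def wGamma0Rset (N : ℕ) : Set (Matrix (Fin 2) (Fin 2) ℝ) :=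
  (fun m => atkinLehner N * m) '' Gamma0Rset N

/-- The subring of real `2 × 2` matrices all of whose entries are rational. -/
noncomputable def rationalMatrices : Subring (Matrix (Fin 2) (Fin 2) ℝ) :=
  (Rat.castHom ℝ).mapMatrix.range

lemma mem_rationalMatrices {m : Matrix (Fin 2) (Fin 2) ℝ} :
    m ∈ rationalMatrices ↔ ∀ i j, ∃ q : ℚ, m i j = (q : ℝ) := by
  constructor
  · rintro ⟨A, rfl⟩ i j
    exact ⟨A i j, rfl⟩
  · intro h
    choose A hA using h
    refine ⟨Matrix.of A, ?_⟩
    ext i j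
    simp [hA]

lemma inv_mem_rationalMatrices {m : Matrix (Fin 2) (Fin 2) ℝ} (hm : m ∈ rationalMatrices) :
    m⁻¹ ∈ rationalMatrices := by
  obtain ⟨A, rfl⟩ := hm
  refine ⟨A⁻¹, ?_⟩
  ext i j
  fin_cases i <;> fin_cases j <;> simp [Matrix.inv_def, Matrix.adjugate_fin_two, Matrix.det_fin_two]

lemma Gamma0Rset_subset_rationalMatrices {N : ℕ} {m : Matrix (Fin 2) (Fin 2) ℝ}
    (hm : m ∈ Gamma0Rset N) : m ∈ rationalMatrices := by
  obtain ⟨γ, -, rfl⟩ := hm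
  exact mem_rationalMatrices.2 fun i j => ⟨(γ i j : ℤ), by simp⟩

lemma irrational_inv_sqrt_mul {N : ℕ} (hsq : ¬ ∃ k : ℕ, N = k ^ 2) {c : ℤ} (hc : c ≠ 0) :
    Irrational ((Real.sqrt N)⁻¹ * (c : ℝ)) := by
  have h : Irrational (Real.sqrt N) := by
    rw [irrational_sqrt_natCast_iff]
    rintro ⟨k, hk⟩
    exact hsq ⟨k, by rw [hk, sq]⟩
  exact h.inv.mul_intCast hc

lemma wGamma0Rset_not_mem_rationalMatrices {N : ℕ} (hsq : ¬ ∃ k : ℕ, N = k ^ 2)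
    {m : Matrix (Fin 2) (Fin 2) ℝ} (hm : m ∈ wGamma0Rset N) : m ∉ rationalMatrices := by
  obtain ⟨_, ⟨γ, -, rfl⟩, rfl⟩ := hm
  intro h
  rw [mem_rationalMatrices] at h
  -- The bottom row of `γ` vanishes, because the entries of the top row of `w_N γ` are rational.
  have key : ∀ j, γ 1 j = 0 := by
    intro j
    by_contra hj
    obtain ⟨q, hq⟩ := h 0 j
    apply irrational_inv_sqrt_mul hsq (neg_ne_zero.2 hj)
    refine ⟨q, hq.symm.trans ?_⟩
    simp [atkinLehner, Matrix.mul_apply, Fin.sum_univ_two]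
  have hd := γ.det_coe
  rw [Matrix.det_fin_two] at hd
  simp [key] at hd

/-- For `N` not a perfect square and `α` an invertible real 2×2 matrix with rational
entries and positive determinant,
`α⁻¹·Γ₀⁺(N)·α ∩ Γ₀⁺(N) = (α⁻¹·Γ₀(N)·α ∩ Γ₀(N)) ∪ (α⁻¹·w_NΓ₀(N)·α ∩ w_NΓ₀(N))`,
where `Γ₀⁺(N) = Γ₀(N) ∪ w_N·Γ₀(N)`. -/
theorem conj_Gamma0Plus_inter (N : ℕ) (hN : 0 < N) (hsq : ¬ ∃ k : ℕ, N = k ^ 2)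
    (α : Matrix (Fin 2) (Fin 2) ℝ)
    (hrat : ∀ i j, ∃ q : ℚ, α i j = (q : ℝ)) (hdet : 0 < α.det) :
    (fun m => α⁻¹ * m * α) '' (Gamma0Rset N ∪ wGamma0Rset N) ∩
        (Gamma0Rset N ∪ wGamma0Rset N) =
      ((fun m => α⁻¹ * m * α) '' Gamma0Rset N ∩ Gamma0Rset N) ∪
        ((fun m => α⁻¹ * m * α) '' wGamma0Rset N ∩ wGamma0Rset N) := by
  have hα : α ∈ rationalMatrices := mem_rationalMatrices.2 hrat
  have hα' := inv_mem_rationalMatrices hα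
  have hu : IsUnit α.det := hdet.ne'.isUnit
  ext x
  constructor
  · rintro ⟨⟨m, hm | hm, rfl⟩, hx | hx⟩
    · exact Or.inl ⟨⟨m, hm, rfl⟩, hx⟩
    · exact absurd (mul_mem (mul_mem hα' (Gamma0Rset_subset_rationalMatrices hm)) hα)
        (wGamma0Rset_not_mem_rationalMatrices hsq hx)
    · have h := mul_mem (mul_mem hα (Gamma0Rset_subset_rationalMatrices hx)) hα'
      have e : α * (α⁻¹ * m * α) * α⁻¹ = m := by
        rw [mul_assoc α⁻¹, Matrix.mul_nonsing_inv_cancel_left _ _ hu,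
          Matrix.mul_nonsing_inv_cancel_right _ _ hu]
      exact absurd (e ▸ h) (wGamma0Rset_not_mem_rationalMatrices hsq hm)
    · exact Or.inr ⟨⟨m, hm, rfl⟩, hx⟩
  · rintro (⟨⟨m, hm, rfl⟩, hx⟩ | ⟨⟨m, hm, rfl⟩, hx⟩)
    · exact ⟨⟨m, Or.inl hm, rfl⟩, Or.inl hx⟩
    · exact ⟨⟨m, Or.inr hm, rfl⟩, Or.inr hx⟩
end
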